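/- Let ω₁ and ω₂ be Magri-compatible symplectic forms on a smooth manifold M with recursion operator N = ω₂♯ ω₁♭, and set I_k = (1/k) Tr(N^k). Then the functions I_k are in involution with respect to both Poisson brackets: {I_i, I_j}₁ = {I_i, I_j}₂ = 0 for all i, j, where { , }₁ and { , }₂ are the Poisson brackets associated with ω₁ and ω₂ respectively. -/

import Mathlib

/-!
Fix `x` and write `P = N x`, `D = dN x`. Vanishing of the torsion says
`D_{Pu} - P D_u = A_u P - P A_u` with `A_u v = D_v u`, so the trace of `P ^ k` times either side
is zero. As `dI_{k+1}(v) = Tr (P ^ k D_v)` by cyclicity (`fderiv_traceInv`), this is the Lenard recursion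
`dI_{k+1} = dI_k ∘ P` (`dTraceInv_succ`).

Both forms are skew and `P` is self-adjoint for both, hence `ω (z, P ^ m z) = 0`. If `z` is the
Hamiltonian vector of `I_i` and `w` that of `I_{i+m}`, then
`ω (w, z) = dI_{i+m}(z) = dI_i(P ^ m z) = ω (z, P ^ m z) = 0`.
-/

open Module Set
noncomputable section

variable {E : Type*} [NormedAddCommGroup E] [NormedSpace ℝ E]

/-- The field of 2-forms `ω` is skew-symmetric at every point of `U`. -/
def IsSkewOn (ω : E → E →L[ℝ] E →L[ℝ] ℝ) (U : Set E) : Prop :=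
  ∀ x ∈ U, ∀ v : E, ω x v v = 0

/-- The field of 2-forms `ω` is nondegenerate at every point of `U`. -/
def IsNondegOn (ω : E → E →L[ℝ] E →L[ℝ] ℝ) (U : Set E) : Prop :=
  ∀ x ∈ U, ∀ v : E, (∀ w : E, ω x v w = 0) → v = 0

/-- The exterior derivative `dω` of the 2-form field `ω`, evaluated at `x` on
the vectors `u, v, w` (constant vector fields have vanishing brackets). -/
def extDeriv2 (ω : E → E →L[ℝ] E →L[ℝ] ℝ) (x u v w : E) : ℝ :=
  fderiv ℝ (fun y => ω y v w) x u - fderiv ℝ (fun y => ω y u w) x v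
    + fderiv ℝ (fun y => ω y u v) x w

/-- The 2-form field `ω` is closed on `U`. -/
def IsClosed2On (ω : E → E →L[ℝ] E →L[ℝ] ℝ) (U : Set E) : Prop :=
  ∀ x ∈ U, ∀ u v w : E, extDeriv2 ω x u v w = 0

/-- Lie bracket of two vector fields. -/
def lieVF (X Y : E → E) (x : E) : E := fderiv ℝ Y x (X x) - fderiv ℝ X x (Y x)

/-- `X` is a smooth section over `U` of the distribution `L`, i.e. `X ∈ Γ(L)`. -/
def TangentTo (L : E → Submodule ℝ E) (U : Set E) (X : E → E) : Prop :=
  ContDiffOn ℝ (⊤ : ℕ∞) X U ∧ ∀ x ∈ U, X x ∈ L x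

/-- `(L_X (ω♭ Y)) x w = X[ω(Y, w)](x) − ω(Y, [X, w])(x)`: the right-hand side in the
characterization `ω(∇^B_X Y, Z) = X[ω(Y,Z)] − ω(Y,[X,Z])` of the Bott connection,
with `Z` frozen to the constant vector field `w` (the expression is tensorial in `Z`). -/
def bottRHS (ω : E → E →L[ℝ] E →L[ℝ] ℝ) (X Y : E → E) (x w : E) : ℝ :=
  fderiv ℝ (fun y => ω y (Y y) w) x (X x) + ω x (Y x) (fderiv ℝ X x w)

/-- `B = ∇^B_X Y` is the Bott covariant derivative of `Y` along `X`:
`ω♭ B = L_X (ω♭ Y)`, i.e. `ω(B, Z) = X[ω(Y,Z)] − ω(Y,[X,Z])` for every `Z`;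
equivalently `B = ω♯ L_X (ω♭ Y)`. -/
def IsBottDeriv (ω : E → E →L[ℝ] E →L[ℝ] ℝ) (U : Set E) (X Y B : E → E) : Prop :=
  ∀ x ∈ U, ∀ w : E, ω x (B x) w = bottRHS ω X Y x w

/-- The covariant derivative `∇_X Y` of the linear connection with Christoffel map `Γ`. -/
def covDeriv (Γ : E → E →L[ℝ] E →L[ℝ] E) (X Y : E → E) (x : E) : E :=
  fderiv ℝ Y x (X x) + Γ x (X x) (Y x)

/-- The connection `Γ` is torsion-free on `U`
(`T(X,Y) = ∇_X Y − ∇_Y X − [X,Y] = 0`; tensorially, `Γ` is symmetric). -/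
def IsTorsionFreeOn (Γ : E → E →L[ℝ] E →L[ℝ] E) (U : Set E) : Prop :=
  ∀ x ∈ U, ∀ u v : E, Γ x u v = Γ x v u

/-- The connection `Γ` parallelizes `ω` on `U`:
`X[ω(Y,Z)] = ω(∇_X Y, Z) + ω(Y, ∇_X Z)` (tensorially, on constant fields). -/
def IsSymplecticConnOn (ω : E → E →L[ℝ] E →L[ℝ] ℝ)
    (Γ : E → E →L[ℝ] E →L[ℝ] E) (U : Set E) : Prop :=
  ∀ x ∈ U, ∀ u v w : E,
    fderiv ℝ (fun y => ω y v w) x u = ω x (Γ x u v) w + ω x v (Γ x u w)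

/-- The connection `Γ` preserves the distribution `L` on `U`:
`∇_X Y ∈ Γ(L)` for every `X ∈ Γ(TM)` and `Y ∈ Γ(L)`. -/
def PreservesOn (Γ : E → E →L[ℝ] E →L[ℝ] E) (L : E → Submodule ℝ E) (U : Set E) : Prop :=
  ∀ Y : E → E, ContDiffOn ℝ (⊤ : ℕ∞) Y U → (∀ x ∈ U, Y x ∈ L x) →
    ∀ x ∈ U, ∀ u : E, fderiv ℝ Y x u + Γ x u (Y x) ∈ L x

/-- The Nijenhuis torsion of the (1,1)-tensor field `N`, evaluated at `x` on `u, v`: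
`T_N(X,Y) = [NX,NY] − N[NX,Y] − N[X,NY] + N²[X,Y]` (tensorial, on constant fields). -/
def nijTorsion (N : E → E →L[ℝ] E) (x u v : E) : E :=
  lieVF (fun y => N y u) (fun y => N y v) x
    - N x (lieVF (fun y => N y u) (fun _ => v) x)
    - N x (lieVF (fun _ => u) (fun y => N y v) x)
    + N x (N x (lieVF (fun _ => u) (fun _ => v) x))

/-- `I_k = (1/k) Tr (N^k)`. -/
def traceInv (N : E → E →L[ℝ] E) (k : ℕ) (x : E) : ℝ :=
  (k : ℝ)⁻¹ * LinearMap.trace ℝ E ((N x ^ k : E →L[ℝ] E) : E →ₗ[ℝ] E)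

/-- The trace as a linear functional on continuous endomorphisms. -/
def clmTrace : (E →L[ℝ] E) →ₗ[ℝ] ℝ :=
  LinearMap.trace ℝ E ∘ₗ ContinuousLinearMap.coeLM ℝ

theorem clmTrace_mul_comm (A B : E →L[ℝ] E) : clmTrace (A * B) = clmTrace (B * A) :=
  LinearMap.trace_mul_comm ℝ (A : E →ₗ[ℝ] E) (B : E →ₗ[ℝ] E)

theorem fderiv_traceInv [FiniteDimensional ℝ E] {N : E → E →L[ℝ] E} {x : E}
    (hN : DifferentiableAt ℝ N x) (k : ℕ) (v : E) :
    fderiv ℝ (traceInv N (k + 1)) x v = clmTrace (N x ^ k * fderiv ℝ N x v) := by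
  have h := hN.hasFDerivAt.fun_pow' (k + 1)
  have h2 := ((LinearMap.toContinuousLinearMap (clmTrace (E := E))).hasFDerivAt.comp x h).const_mul
    (((k + 1 : ℕ) : ℝ)⁻¹)
  have h3 : HasFDerivAt (traceInv N (k + 1)) _ x := h2
  rw [h3.fderiv]
  have key : ∀ i ∈ Finset.range (k + 1),
      clmTrace (N x ^ (k - i) * fderiv ℝ N x v * N x ^ i)
        = clmTrace (N x ^ k * fderiv ℝ N x v) := by
    intro i hi
    rw [clmTrace_mul_comm, ← mul_assoc, ← pow_add]
    congr 3
    have := Finset.mem_range.1 hi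
    omega
  have hk : ((k : ℝ) + 1) ≠ 0 := by positivity
  simp [mul_assoc] at key ⊢
  rw [Finset.sum_congr rfl (fun i hi => key i (Nat.lt_succ_iff.1 (Finset.mem_range.1 hi)))]
  simp
  field_simp

/-- The Nijenhuis torsion in terms of the derivative of `N`. -/
theorem nijTorsion_eq {N : E → E →L[ℝ] E} {x : E} (hN : DifferentiableAt ℝ N x) (u v : E) :
    nijTorsion N x u v = fderiv ℝ N x (N x u) v - fderiv ℝ N x (N x v) u
      + N x (fderiv ℝ N x v u) - N x (fderiv ℝ N x u v) := by
  have h : ∀ a : E, fderiv ℝ (fun y => N y a) x = (fderiv ℝ N x).flip a := by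
    intro a
    ext b
    rw [fderiv_clm_apply hN (differentiableAt_const a)]
    simp
  simp [nijTorsion, lieVF, h]

/-- Lenard recursion `dI_{k+1} = dI_k ∘ N`: the difference of both sides is the trace of
`N ^ (k - 1)` times a commutator with `N`. -/
theorem dTraceInv_succ [FiniteDimensional ℝ E] {N : E → E →L[ℝ] E} {x : E}
    (hN : DifferentiableAt ℝ N x) (hT : ∀ u v : E, nijTorsion N x u v = 0)
    {k : ℕ} (hk : 1 ≤ k) (u : E) :
    fderiv ℝ (traceInv N (k + 1)) x u = fderiv ℝ (traceInv N k) x (N x u) := by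
  obtain ⟨k, rfl⟩ := Nat.exists_eq_add_of_le' hk
  rw [fderiv_traceInv hN, fderiv_traceInv hN]
  have hop : fderiv ℝ N x (N x u) = N x * fderiv ℝ N x u
      + ((fderiv ℝ N x).flip u * N x - N x * (fderiv ℝ N x).flip u) := by
    ext v
    have := hT u v
    rw [nijTorsion_eq hN] at this
    rw [← sub_eq_zero, ← this]
    simp
    abel
  have hcomm : clmTrace (N x ^ k * ((fderiv ℝ N x).flip u * N x))
      = clmTrace (N x ^ k * (N x * (fderiv ℝ N x).flip u)) := by
    rw [← mul_assoc, clmTrace_mul_comm, ← mul_assoc, ← mul_assoc, ← pow_succ, ← pow_succ']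
  rw [hop, mul_add, mul_sub, map_add, map_sub, hcomm, sub_self, add_zero, pow_succ, mul_assoc]

theorem dTraceInv_add [FiniteDimensional ℝ E] {N : E → E →L[ℝ] E} {x : E}
    (hN : DifferentiableAt ℝ N x) (hT : ∀ u v : E, nijTorsion N x u v = 0)
    {i : ℕ} (hi : 1 ≤ i) (m : ℕ) (u : E) :
    fderiv ℝ (traceInv N (i + m)) x u = fderiv ℝ (traceInv N i) x ((N x ^ m) u) := by
  induction m generalizing u with
  | zero => simp
  | succ m ih =>
    rw [← add_assoc, dTraceInv_succ hN hT (by omega), ih, pow_succ]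
    rfl

theorem skew_swap {B : E →L[ℝ] E →L[ℝ] ℝ} (hB : ∀ v, B v v = 0) (u v : E) :
    B u v = -B v u := by
  have := hB (u + v)
  simp [hB] at this
  linarith

theorem self_pow_eq_zero {B : E →L[ℝ] E →L[ℝ] ℝ} (hB : ∀ v, B v v = 0) {P : E →L[ℝ] E}
    (hP : ∀ u v, B (P u) v = B u (P v)) (m : ℕ) (z : E) : B z ((P ^ m) z) = 0 := by
  have hadj : ∀ m : ℕ, ∀ u v, B ((P ^ m) u) v = B u ((P ^ m) v) := by
    intro m
    induction m with
    | zero => simp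
    | succ m ih =>
      intro u v
      have h1 : (P ^ (m + 1)) u = (P ^ m) (P u) := by rw [pow_succ]; rfl
      have h2 : (P ^ (m + 1)) v = P ((P ^ m) v) := by rw [pow_succ']; rfl
      rw [h1, h2, ih, hP]
  have := skew_swap hB z ((P ^ m) z)
  rw [hadj] at this
  linarith

/-- The bracket of `f i` and `f j` vanishes for any sequence of covectors `f` obeying the
Lenard recursion with respect to a self-adjoint `P`. -/
theorem bracket_eq_zero {B : E →L[ℝ] E →L[ℝ] ℝ} (hB : ∀ v, B v v = 0) {P : E →L[ℝ] E}
    (hP : ∀ u v, B (P u) v = B u (P v)) {f : ℕ → E →L[ℝ] ℝ}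
    (hf : ∀ i, 1 ≤ i → ∀ m u, f (i + m) u = f i ((P ^ m) u))
    {i j : ℕ} (hi : 1 ≤ i) (hj : 1 ≤ j) {z w : E}
    (hz : ∀ v, B z v = f i v) (hw : ∀ v, B w v = f j v) : B z w = 0 := by
  rcases le_total i j with h | h
  · obtain ⟨m, rfl⟩ := Nat.exists_eq_add_of_le h
    rw [skew_swap hB, hw, hf i hi, ← hz, self_pow_eq_zero hB hP, neg_zero]
  · obtain ⟨m, rfl⟩ := Nat.exists_eq_add_of_le h
    rw [hz, hf j hj, ← hw, self_pow_eq_zero hB hP]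

/-- Let `ω₁` and `ω₂` be Magri-compatible symplectic forms on a smooth
manifold `M` with recursion operator `N = ω₂♯ ω₁♭` (i.e. `ω₂(Nu,v) = ω₁(u,v)`, and the
Nijenhuis torsion of `N` vanishes), and set `I_k = (1/k) Tr(N^k)`.  Then the functions
`I_k` are in involution with respect to both Poisson brackets:
`{I_i, I_j}₁ = {I_i, I_j}₂ = 0` for all `i, j ≥ 1`, where `{f, g} = ω(ω♯·df, ω♯·dg)`. -/
theorem traces_in_involution
    {E : Type*} [NormedAddCommGroup E] [NormedSpace ℝ E] [FiniteDimensional ℝ E]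
    (U : Set E) (hU : IsOpen U)
    (ω₁ : E → E →L[ℝ] E →L[ℝ] ℝ) (hω₁sm : ContDiffOn ℝ (⊤ : ℕ∞) ω₁ U)
    (hskew₁ : IsSkewOn ω₁ U) (hnd₁ : IsNondegOn ω₁ U) (hcl₁ : IsClosed2On ω₁ U)
    (ω₂ : E → E →L[ℝ] E →L[ℝ] ℝ) (hω₂sm : ContDiffOn ℝ (⊤ : ℕ∞) ω₂ U)
    (hskew₂ : IsSkewOn ω₂ U) (hnd₂ : IsNondegOn ω₂ U) (hcl₂ : IsClosed2On ω₂ U)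
    (N : E → E →L[ℝ] E) (hNsm : ContDiffOn ℝ (⊤ : ℕ∞) N U)
    (hNdef : ∀ x ∈ U, ∀ u v : E, ω₂ x (N x u) v = ω₁ x u v)
    (hMagri : ∀ x ∈ U, ∀ u v : E, nijTorsion N x u v = 0) :
    ∀ i j : ℕ, 1 ≤ i → 1 ≤ j → ∀ x ∈ U,
      (∀ z w : E, (∀ v : E, ω₁ x z v = fderiv ℝ (traceInv N i) x v) →
        (∀ v : E, ω₁ x w v = fderiv ℝ (traceInv N j) x v) → ω₁ x z w = 0) ∧
      (∀ z w : E, (∀ v : E, ω₂ x z v = fderiv ℝ (traceInv N i) x v) →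
        (∀ v : E, ω₂ x w v = fderiv ℝ (traceInv N j) x v) → ω₂ x z w = 0) := by
  intro i j hi hj x hx
  have hN : DifferentiableAt ℝ N x :=
    (hNsm.contDiffAt (hU.mem_nhds hx)).differentiableAt (by simp)
  have hf := fun i (hi : 1 ≤ i) m u => dTraceInv_add hN (hMagri x hx) hi m u
  have hP₂ : ∀ u v, ω₂ x (N x u) v = ω₂ x u (N x v) := by
    intro u v
    rw [hNdef x hx, skew_swap (hskew₁ x hx), ← hNdef x hx, ← skew_swap (hskew₂ x hx)]
  have hP₁ : ∀ u v, ω₁ x (N x u) v = ω₁ x u (N x v) := by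
    intro u v
    rw [← hNdef x hx, hP₂, hNdef x hx]
  exact ⟨fun z w hz hw => bracket_eq_zero (f := fun k => fderiv ℝ (traceInv N k) x)
      (hskew₁ x hx) hP₁ hf hi hj hz hw,
    fun z w hz hw => bracket_eq_zero (f := fun k => fderiv ℝ (traceInv N k) x)
      (hskew₂ x hx) hP₂ hf hi hj hz hw⟩
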